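/- Hoffman–Wielandt type bound for p ≥ 2: under the stated setup and assumptions, let Σ = diag(Σ_k, Σ_⊥) and let Σ' = diag(Σ̂, 0) be of conformal size, where Σ̂ contains the singular values of Â = QQ*A. Then for every p ∈ [2,∞] one has ‖Σ − Σ'‖_p ≤ √(‖Σ_⊥‖_p² + γ_k^{4q}·‖Σ_⊥Ω_2Ω_1†‖_p²) in the Schatten-p norm. -/

import Mathlib

open scoped ENNReal
open Matrix

/-- The `j`-th largest singular value (0-indexed) of a complex matrix,
obtained as the decreasingly sorted square roots of the eigenvalues of `Mᴴ * M`. -/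
noncomputable def sval {m n : ℕ} (M : Matrix (Fin m) (Fin n) ℂ) (j : ℕ) : ℝ :=
  (List.insertionSort (· ≥ ·)
    ((List.ofFn (Matrix.isHermitian_conjTranspose_mul_self M).eigenvalues).map Real.sqrt)).getD j 0

/-- The Schatten-`p` norm (`p = ∞` gives the spectral norm). -/
noncomputable def schatten {m n : ℕ} (p : ℝ≥0∞) (M : Matrix (Fin m) (Fin n) ℂ) : ℝ :=
  if p = ⊤ then sval M 0
  else (∑ j ∈ Finset.range n, sval M j ^ p.toReal) ^ (1 / p.toReal)

/-- Moore–Penrose pseudoinverse of a full-row-rank matrix. -/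
noncomputable def rpinv {a b : ℕ} (M : Matrix (Fin a) (Fin b) ℂ) : Matrix (Fin b) (Fin a) ℂ :=
  Mᴴ * (M * Mᴴ)⁻¹

/-- Rectangular diagonal matrix with entries `σ (off), σ (off+1), …` on the diagonal. -/
noncomputable def diagRect (σ : ℕ → ℝ) (off a b : ℕ) : Matrix (Fin a) (Fin b) ℂ :=
  Matrix.of fun i j => if (i : ℕ) = (j : ℕ) then (σ (off + (i : ℕ)) : ℂ) else 0

/-- The first `b` columns of a matrix with `b + c` columns. -/
def colsL {a b c : ℕ} (M : Matrix (Fin a) (Fin (b + c)) ℂ) : Matrix (Fin a) (Fin b) ℂ :=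
  M.submatrix id (Fin.castAdd c)

/-- The last `c` columns of a matrix with `b + c` columns. -/
def colsR {a b c : ℕ} (M : Matrix (Fin a) (Fin (b + c)) ℂ) : Matrix (Fin a) (Fin c) ℂ :=
  M.submatrix id (Fin.natAdd b)

/-!
Write `P = 1 - Q Qᴴ`. By Pythagoras `‖M x‖² = ‖Qᴴ M x‖² + ‖P M x‖²` for every `M`, so Weyl
monotonicity and a trace comparison show that the gaps `σ_i(M)² - σ_i(Qᴴ M)²` are weakly majorized
by the `σ_i(P M)²`; weak majorization bounds every `ℓ_r` norm with `r ≥ 1`, here `r = p / 2`.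
For `M = A V_k` the residual is small: recombining the sketch `Q R = (A Aᴴ)^q A Ω`, which `P` kills,
gives `P A V_k = -P U_⊥ Σ_⊥^{2q} (Σ_⊥ Ω₂ Ω₁†) Σ_k^{-2q}`.
Finally `(x - y)² ≤ x² - y²` for `0 ≤ y ≤ x` passes from these gaps to the first `k` entries of
`Σ - Σ'`, and the remaining ones are at most those of `Σ_⊥`.
-/

section CourantFischer

open scoped InnerProductSpace
open Module

variable {𝕜 E ι : Type*} [RCLike 𝕜] [NormedAddCommGroup E] [InnerProductSpace 𝕜 E] [Fintype ι]

theorem inner_apply_eq_sum (b : OrthonormalBasis ι 𝕜 E) {T : E →ₗ[𝕜] E} {μ : ι → ℝ}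
    (hT : ∀ i, T (b i) = (μ i : 𝕜) • b i) (x y : E) :
    ⟪T x, y⟫_𝕜 = ∑ i, (μ i : 𝕜) * (⟪x, b i⟫_𝕜 * ⟪b i, y⟫_𝕜) := by
  have hTx : T x = ∑ i, (⟪b i, x⟫_𝕜 * (μ i : 𝕜)) • b i := by
    conv_lhs => rw [← b.sum_repr' x]
    simp only [map_sum, map_smul, hT, smul_smul]
  simp only [hTx, sum_inner, inner_smul_left, map_mul, RCLike.conj_ofReal, inner_conj_symm]
  exact Finset.sum_congr rfl fun i _ => by ring

theorem isSymmetric_of_apply_eq_smul (b : OrthonormalBasis ι 𝕜 E) {T : E →ₗ[𝕜] E} {μ : ι → ℝ}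
    (hT : ∀ i, T (b i) = (μ i : 𝕜) • b i) : T.IsSymmetric := fun x y => by
  rw [← inner_conj_symm x (T y), inner_apply_eq_sum b hT, inner_apply_eq_sum b hT]
  simp only [map_sum, map_mul, RCLike.conj_ofReal, inner_conj_symm, mul_comm ⟪x, _⟫_𝕜]

theorem re_inner_apply_self_eq_sum (b : OrthonormalBasis ι 𝕜 E) {T : E →ₗ[𝕜] E} {μ : ι → ℝ}
    (hT : ∀ i, T (b i) = (μ i : 𝕜) • b i) (x : E) :
    RCLike.re ⟪T x, x⟫_𝕜 = ∑ i, μ i * ‖⟪b i, x⟫_𝕜‖ ^ 2 := by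
  rw [inner_apply_eq_sum b hT, map_sum]
  refine Finset.sum_congr rfl fun i _ => ?_
  rw [← inner_conj_symm x, RCLike.conj_mul, RCLike.re_ofReal_mul]
  norm_cast

theorem finrank_orthogonal_span_image_add_card (b : OrthonormalBasis ι 𝕜 E) (S : Finset ι) :
    finrank 𝕜 (Submodule.span 𝕜 (b '' S))ᗮ + S.card = Fintype.card ι := by
  have : FiniteDimensional 𝕜 E := b.toBasis.finiteDimensional_of_finite
  have hspan : finrank 𝕜 (Submodule.span 𝕜 (b '' S)) = S.card := by
    rw [Set.image_eq_range]
    exact (finrank_span_eq_card (b.orthonormal.linearIndependent.comp _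
      Subtype.val_injective)).trans (Fintype.card_coe S)
  rw [← hspan, add_comm, Submodule.finrank_add_finrank_orthogonal,
    finrank_eq_card_basis b.toBasis]

theorem inner_eq_zero_of_mem_orthogonal_span_image (b : OrthonormalBasis ι 𝕜 E) {S : Finset ι}
    {x : E} (hx : x ∈ (Submodule.span 𝕜 (b '' S))ᗮ) {i : ι} (hi : i ∈ S) : ⟪b i, x⟫_𝕜 = 0 :=
  hx _ (Submodule.subset_span (Set.mem_image_of_mem b hi))

variable [FiniteDimensional 𝕜 E] {n : ℕ}

theorem re_inner_apply_self_le_of_mem_orthogonal {T : E →ₗ[𝕜] E} (hT : T.IsSymmetric)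
    (hn : finrank 𝕜 E = n) {i : Fin n} {x : E}
    (hx : x ∈ (Submodule.span 𝕜 (hT.eigenvectorBasis hn '' Finset.Iio i))ᗮ) :
    RCLike.re ⟪T x, x⟫_𝕜 ≤ hT.eigenvalues hn i * ‖x‖ ^ 2 := by
  rw [re_inner_apply_self_eq_sum _ (hT.apply_eigenvectorBasis hn),
    ← (hT.eigenvectorBasis hn).sum_sq_norm_inner_right, Finset.mul_sum]
  refine Finset.sum_le_sum fun j _ => ?_
  rcases lt_or_ge j i with hji | hij
  · simp [inner_eq_zero_of_mem_orthogonal_span_image _ hx (Finset.mem_Iio.mpr hji)]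
  · gcongr
    exact hT.eigenvalues_antitone hn hij

theorem le_re_inner_apply_self_of_mem_orthogonal {T : E →ₗ[𝕜] E} (hT : T.IsSymmetric)
    (hn : finrank 𝕜 E = n) {i : Fin n} {x : E}
    (hx : x ∈ (Submodule.span 𝕜 (hT.eigenvectorBasis hn '' Finset.Ioi i))ᗮ) :
    hT.eigenvalues hn i * ‖x‖ ^ 2 ≤ RCLike.re ⟪T x, x⟫_𝕜 := by
  rw [re_inner_apply_self_eq_sum _ (hT.apply_eigenvectorBasis hn),
    ← (hT.eigenvectorBasis hn).sum_sq_norm_inner_right, Finset.mul_sum]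
  refine Finset.sum_le_sum fun j _ => ?_
  rcases lt_or_ge i j with hij | hji
  · simp [inner_eq_zero_of_mem_orthogonal_span_image _ hx (Finset.mem_Ioi.mpr hij)]
  · gcongr
    exact hT.eigenvalues_antitone hn hji

theorem eigenvalues_le_iff_exists_submodule {T : E →ₗ[𝕜] E} (hT : T.IsSymmetric)
    (hn : finrank 𝕜 E = n) (i : Fin n) {c : ℝ} :
    hT.eigenvalues hn i ≤ c ↔ ∃ W : Submodule 𝕜 E, n ≤ finrank 𝕜 W + i ∧
      ∀ x ∈ W, RCLike.re ⟪T x, x⟫_𝕜 ≤ c * ‖x‖ ^ 2 := by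
  set b := hT.eigenvectorBasis hn
  constructor
  · intro hc
    refine ⟨(Submodule.span 𝕜 (b '' Finset.Iio i))ᗮ, ?_, fun x hx => ?_⟩
    · have := finrank_orthogonal_span_image_add_card b (Finset.Iio i)
      rw [Fin.card_Iio, Fintype.card_fin] at this
      exact this.ge
    · exact (re_inner_apply_self_le_of_mem_orthogonal hT hn hx).trans (by gcongr)
  · rintro ⟨W, hW, hWc⟩
    set L := (Submodule.span 𝕜 (b '' Finset.Ioi i))ᗮ with hL_def
    have hL : finrank 𝕜 L = i + 1 := by
      have := finrank_orthogonal_span_image_add_card b (Finset.Ioi i)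
      rw [Fin.card_Ioi, Fintype.card_fin, ← hL_def] at this
      lia
    have hinf : W ⊓ L ≠ ⊥ := by
      rw [← Submodule.one_le_finrank_iff]
      have := Submodule.finrank_sup_add_finrank_inf_eq W L
      have := Submodule.finrank_le (W ⊔ L)
      lia
    obtain ⟨x, ⟨hxW, hxL⟩, hx0⟩ := Submodule.exists_mem_ne_zero_of_ne_bot hinf
    have hlow := le_re_inner_apply_self_of_mem_orthogonal hT hn hxL
    exact le_of_mul_le_mul_right (hlow.trans (hWc x hxW)) (by positivity)

theorem eigenvalues_le_add_of_re_inner_le {T S : E →ₗ[𝕜] E} (hT : T.IsSymmetric)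
    (hS : S.IsSymmetric) (hn : finrank 𝕜 E = n) {t : ℝ}
    (h : ∀ x, RCLike.re ⟪T x, x⟫_𝕜 ≤ RCLike.re ⟪S x, x⟫_𝕜 + t * ‖x‖ ^ 2) (i : Fin n) :
    hT.eigenvalues hn i ≤ hS.eigenvalues hn i + t := by
  obtain ⟨W, hdim, hW⟩ := (eigenvalues_le_iff_exists_submodule hS hn i).mp le_rfl
  refine (eigenvalues_le_iff_exists_submodule hT hn i).mpr ⟨W, hdim, fun x hx => ?_⟩
  rw [add_mul]
  exact (h x).trans (add_le_add_left (hW x hx) _)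

theorem exists_isSymmetric_posPart_sub {G : E →ₗ[𝕜] E} (hG : G.IsSymmetric)
    (hn : finrank 𝕜 E = n) (t : ℝ) :
    ∃ P : E →ₗ[𝕜] E, P.IsSymmetric ∧ (∀ x, 0 ≤ RCLike.re ⟪P x, x⟫_𝕜) ∧
      (∀ x, RCLike.re ⟪G x, x⟫_𝕜 ≤ RCLike.re ⟪P x, x⟫_𝕜 + t * ‖x‖ ^ 2) ∧
      RCLike.re (P.trace 𝕜 E) = ∑ i, max (hG.eigenvalues hn i - t) 0 := by
  set b := hG.eigenvectorBasis hn
  set g := hG.eigenvalues hn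
  let P : E →ₗ[𝕜] E := b.toBasis.constr 𝕜 fun i => ((max (g i - t) 0 : ℝ) : 𝕜) • b i
  have hP : ∀ i, P (b i) = ((max (g i - t) 0 : ℝ) : 𝕜) • b i := fun i => by
    rw [← b.coe_toBasis]
    exact b.toBasis.constr_basis 𝕜 _ i
  have hPform := re_inner_apply_self_eq_sum b hP
  refine ⟨P, isSymmetric_of_apply_eq_smul b hP, fun x => ?_, fun x => ?_, ?_⟩
  · rw [hPform]
    positivity
  · rw [hPform, re_inner_apply_self_eq_sum b (hG.apply_eigenvectorBasis hn),
      ← b.sum_sq_norm_inner_right, Finset.mul_sum, ← Finset.sum_add_distrib]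
    refine Finset.sum_le_sum fun i _ => ?_
    rw [← add_mul]
    gcongr
    linarith [le_max_left (g i - t) 0]
  · simp [LinearMap.trace_eq_sum_inner P b, hP, inner_smul_right]

/-- The trace of `S + (G - t)₊ - S` is the right-hand side, and `T ≤ S + (G - t)₊ + t`. -/
theorem sum_posPart_eigenvalues_sub_le {T S G : E →ₗ[𝕜] E} (hT : T.IsSymmetric)
    (hS : S.IsSymmetric) (hG : G.IsSymmetric) (hn : finrank 𝕜 E = n)
    (h : ∀ x, RCLike.re ⟪T x, x⟫_𝕜 ≤ RCLike.re ⟪S x, x⟫_𝕜 + RCLike.re ⟪G x, x⟫_𝕜) (t : ℝ) :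
    ∑ i, max (hT.eigenvalues hn i - hS.eigenvalues hn i - t) 0 ≤
      ∑ i, max (hG.eigenvalues hn i - t) 0 := by
  obtain ⟨P, hP, hP0, hGP, htrace⟩ := exists_isSymmetric_posPart_sub hG hn t
  have hSP := hS.add hP
  have hST : ∀ i, hT.eigenvalues hn i ≤ hSP.eigenvalues hn i + t :=
    eigenvalues_le_add_of_re_inner_le hT hSP hn fun x => by
      rw [LinearMap.add_apply, inner_add_left, map_add]
      linarith [h x, hGP x]
  have hSS : ∀ i, hS.eigenvalues hn i ≤ hSP.eigenvalues hn i := fun i => by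
    simpa using eigenvalues_le_add_of_re_inner_le hS hSP hn (t := 0) (fun x => by
      rw [LinearMap.add_apply, inner_add_left, map_add]
      linarith [hP0 x]) i
  calc ∑ i, max (hT.eigenvalues hn i - hS.eigenvalues hn i - t) 0
      ≤ ∑ i, (hSP.eigenvalues hn i - hS.eigenvalues hn i) :=
        Finset.sum_le_sum fun i _ =>
          max_le (by linarith [hST i]) (sub_nonneg.mpr (hSS i))
    _ = RCLike.re (P.trace 𝕜 E) := by
        rw [Finset.sum_sub_distrib, ← hSP.re_trace_eq_sum_eigenvalues,
          ← hS.re_trace_eq_sum_eigenvalues, map_add, map_add, add_sub_cancel_left]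
    _ = ∑ i, max (hG.eigenvalues hn i - t) 0 := htrace

end CourantFischer

section SingularValues

open scoped InnerProductSpace
open Module

theorem finrank_le_finrank_comap_add {K D E : Type*} [DivisionRing K] [AddCommGroup D] [Module K D]
    [FiniteDimensional K D] [AddCommGroup E] [Module K E] [FiniteDimensional K E] (C : D →ₗ[K] E)
    {W : Submodule K E} {i : ℕ} (hW : finrank K E ≤ finrank K W + i) :
    finrank K D ≤ finrank K (W.comap C) + i := by
  have hker : LinearMap.ker (W.mkQ ∘ₗ C) = W.comap C := by
    rw [LinearMap.ker_comp, Submodule.ker_mkQ]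
  have hrange := (LinearMap.range (W.mkQ ∘ₗ C)).finrank_le
  have hrank := LinearMap.finrank_range_add_finrank_ker (W.mkQ ∘ₗ C)
  have hquot := W.finrank_quotient_add_finrank
  rw [hker] at hrank
  lia

variable {𝕜 D E F G : Type*} [RCLike 𝕜]
  [NormedAddCommGroup E] [InnerProductSpace 𝕜 E] [FiniteDimensional 𝕜 E]
  [NormedAddCommGroup F] [InnerProductSpace 𝕜 F] [FiniteDimensional 𝕜 F]
  [NormedAddCommGroup G] [InnerProductSpace 𝕜 G] [FiniteDimensional 𝕜 G]

theorem re_inner_adjoint_comp_self_apply (A : E →ₗ[𝕜] F) (x : E) :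
    RCLike.re ⟪(A.adjoint ∘ₗ A) x, x⟫_𝕜 = ‖A x‖ ^ 2 := by
  rw [LinearMap.comp_apply, LinearMap.adjoint_inner_left, inner_self_eq_norm_sq]

theorem singularValues_le_iff_exists_submodule (A : E →ₗ[𝕜] F) (i : ℕ) {c : ℝ} (hc : 0 ≤ c) :
    A.singularValues i ≤ c ↔ ∃ W : Submodule 𝕜 E, finrank 𝕜 E ≤ finrank 𝕜 W + i ∧
      ∀ x ∈ W, ‖A x‖ ≤ c * ‖x‖ := by
  rcases lt_or_ge i (finrank 𝕜 E) with hi | hi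
  · rw [← pow_le_pow_iff_left₀ (A.singularValues_nonneg i) hc two_ne_zero,
      A.sq_singularValues_of_lt rfl hi, eigenvalues_le_iff_exists_submodule]
    simp only [re_inner_adjoint_comp_self_apply, ← mul_pow]
    exact exists_congr fun W => and_congr_right fun _ => forall₂_congr fun x _ =>
      pow_le_pow_iff_left₀ (norm_nonneg _) (by positivity) two_ne_zero
  · refine iff_of_true ((A.singularValues_of_finrank_le hi).trans_le hc) ⟨⊥, by lia, ?_⟩
    simp

theorem singularValues_comp_le_mul_left (A : E →ₗ[𝕜] F) {B : F →ₗ[𝕜] G} {c : ℝ} (hc : 0 ≤ c)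
    (hB : ∀ y, ‖B y‖ ≤ c * ‖y‖) (i : ℕ) :
    (B ∘ₗ A).singularValues i ≤ c * A.singularValues i := by
  have hs := A.singularValues_nonneg i
  obtain ⟨W, hdim, hW⟩ := (singularValues_le_iff_exists_submodule A i hs).mp le_rfl
  refine (singularValues_le_iff_exists_submodule _ i (mul_nonneg hc hs)).mpr
    ⟨W, hdim, fun x hx => ?_⟩
  rw [mul_assoc]
  exact (hB (A x)).trans (mul_le_mul_of_nonneg_left (hW x hx) hc)

theorem singularValues_comp_le_mul_right [NormedAddCommGroup D] [InnerProductSpace 𝕜 D]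
    [FiniteDimensional 𝕜 D] (A : E →ₗ[𝕜] F) {C : D →ₗ[𝕜] E} {c : ℝ} (hc : 0 ≤ c)
    (hC : ∀ x, ‖C x‖ ≤ c * ‖x‖) (i : ℕ) :
    (A ∘ₗ C).singularValues i ≤ A.singularValues i * c := by
  have hs := A.singularValues_nonneg i
  obtain ⟨W, hdim, hW⟩ := (singularValues_le_iff_exists_submodule A i hs).mp le_rfl
  refine (singularValues_le_iff_exists_submodule _ i (mul_nonneg hs hc)).mpr
    ⟨W.comap C, finrank_le_finrank_comap_add C hdim, fun x hx => ?_⟩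
  rw [mul_assoc]
  exact (hW (C x) hx).trans (mul_le_mul_of_nonneg_left (hC x) hs)

theorem sum_posPart_sq_singularValues_sub_le {A : E →ₗ[𝕜] F} {B : E →ₗ[𝕜] G} [NormedAddCommGroup D]
    [InnerProductSpace 𝕜 D] [FiniteDimensional 𝕜 D] {N : E →ₗ[𝕜] D}
    (h : ∀ x, ‖A x‖ ^ 2 ≤ ‖B x‖ ^ 2 + ‖N x‖ ^ 2) {n : ℕ} (hn : finrank 𝕜 E = n) (t : ℝ) :
    ∑ i : Fin n, max (A.singularValues i ^ 2 - B.singularValues i ^ 2 - t) 0 ≤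
      ∑ i : Fin n, max (N.singularValues i ^ 2 - t) 0 := by
  simp only [LinearMap.sq_singularValues_fin _ hn]
  refine sum_posPart_eigenvalues_sub_le _ _ _ hn (fun x => ?_) t
  simpa only [re_inner_adjoint_comp_self_apply] using h x

end SingularValues

section Majorization

open intervalIntegral

theorem intervalIntegrable_rpow_mul_of_continuous {s : ℝ} (hs : -1 < s) {f : ℝ → ℝ}
    (hf : Continuous f) (a b : ℝ) :
    IntervalIntegrable (fun t => t ^ s * f t) MeasureTheory.volume a b :=
  (intervalIntegrable_rpow' hs).mul_continuousOn hf.continuousOn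

/-- For `r > 1` this exhibits `x ^ r` as a superposition of the functions `(x - t)₊`. -/
theorem integral_rpow_mul_posPart_sub {r x M : ℝ} (hr : 1 < r) (hx : 0 ≤ x) (hxM : x ≤ M) :
    ∫ t in 0..M, t ^ (r - 2) * max (x - t) 0 = x ^ r / (r * (r - 1)) := by
  have hint := intervalIntegrable_rpow_mul_of_continuous (s := r - 2) (by linarith)
    (f := fun t => max (x - t) 0) (by fun_prop)
  have hright : ∫ t in x..M, t ^ (r - 2) * max (x - t) 0 = 0 := by
    refine (integral_congr fun t ht => ?_).trans integral_zero
    rw [Set.uIcc_of_le hxM] at ht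
    simp only [max_eq_right (sub_nonpos.mpr ht.1), mul_zero]
  have hleft : ∫ t in 0..x, t ^ (r - 2) * max (x - t) 0 =
      ∫ t in 0..x, (x * t ^ (r - 2) - t ^ (r - 1)) := by
    refine integral_congr_ae (Filter.Eventually.of_forall fun t ht => ?_)
    rw [Set.uIoc_of_le hx] at ht
    rw [max_eq_left (sub_nonneg.mpr ht.2), show r - 1 = r - 2 + 1 by ring,
      Real.rpow_add_one ht.1.ne']
    ring
  have hxr : x * x ^ (r - 1) = x ^ r := by
    rw [mul_comm, ← Real.rpow_add_one' hx (by linarith), sub_add_cancel]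
  rw [← integral_add_adjacent_intervals (hint 0 x) (hint x M), hleft, hright, add_zero,
    integral_sub ((intervalIntegrable_rpow' (by linarith)).const_mul x)
      (intervalIntegrable_rpow' (by linarith)), integral_const_mul,
    integral_rpow (Or.inl (by linarith)), integral_rpow (Or.inl (by linarith)),
    show r - 2 + 1 = r - 1 by ring, sub_add_cancel, Real.zero_rpow (by linarith),
    Real.zero_rpow (by linarith), sub_zero, sub_zero, mul_div_assoc', hxr]
  have : r - 1 ≠ 0 := by linarith
  have : r ≠ 0 := by linarith
  field_simp
  ring

variable {ι κ : Type*} [Fintype ι] [Fintype κ]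

theorem integral_rpow_mul_sum_posPart_sub {r M : ℝ} (hr : 1 < r) {x : ι → ℝ} (hx : ∀ i, 0 ≤ x i)
    (hxM : ∀ i, x i ≤ M) :
    ∫ t in 0..M, t ^ (r - 2) * ∑ i, max (x i - t) 0 = (∑ i, x i ^ r) / (r * (r - 1)) := by
  simp only [Finset.mul_sum, Finset.sum_div]
  rw [integral_finsetSum fun i _ =>
    intervalIntegrable_rpow_mul_of_continuous (by linarith) (by fun_prop) 0 M]
  exact Finset.sum_congr rfl fun i _ => integral_rpow_mul_posPart_sub hr (hx i) (hxM i)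

theorem sum_rpow_le_of_sum_posPart_sub_le {x y : ι → ℝ} (hx : ∀ i, 0 ≤ x i) (hy : ∀ i, 0 ≤ y i)
    (h : ∀ t, 0 ≤ t → ∑ i, max (x i - t) 0 ≤ ∑ i, max (y i - t) 0) {r : ℝ} (hr : 1 ≤ r) :
    ∑ i, x i ^ r ≤ ∑ i, y i ^ r := by
  rcases hr.eq_or_lt with rfl | hr
  · simpa [hx, hy] using h 0 le_rfl
  have hsum : ∀ z : ι → ℝ, (∀ i, 0 ≤ z i) → ∀ i, z i ≤ ∑ j, z j := fun z hz i =>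
    Finset.single_le_sum (fun j _ => hz j) (Finset.mem_univ i)
  have hx0 : 0 ≤ ∑ i, x i := Finset.sum_nonneg fun i _ => hx i
  have hy0 : 0 ≤ ∑ i, y i := Finset.sum_nonneg fun i _ => hy i
  have hpos : 0 < r * (r - 1) := mul_pos (by linarith) (by linarith)
  rw [← div_le_div_iff_of_pos_right hpos,
    ← integral_rpow_mul_sum_posPart_sub hr hx fun i => (hsum x hx i).trans
      (le_add_of_nonneg_right hy0),
    ← integral_rpow_mul_sum_posPart_sub hr hy fun i => (hsum y hy i).trans
      (le_add_of_nonneg_left hx0)]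
  have hint : ∀ z : ι → ℝ, _ := fun z => intervalIntegrable_rpow_mul_of_continuous
    (s := r - 2) (by linarith) (f := fun t => ∑ i, max (z i - t) 0) (by fun_prop) 0
    (∑ i, x i + ∑ i, y i)
  exact integral_mono_on (add_nonneg hx0 hy0) (hint x) (hint y) fun t ht =>
    mul_le_mul_of_nonneg_left (h t ht.1) (Real.rpow_nonneg ht.1 _)

theorem norm_toLp_eq_sum_rpow {r : ℝ≥0∞} (hr : 0 < r.toReal) (x : ι → ℝ) :
    ‖WithLp.toLp r x‖ = (∑ i, |x i| ^ r.toReal) ^ (1 / r.toReal) := by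
  simp only [PiLp.norm_eq_sum hr, Real.norm_eq_abs]

theorem norm_toLp_top_le_iff {x : ι → ℝ} {c : ℝ} (hc : 0 ≤ c) :
    ‖WithLp.toLp ∞ x‖ ≤ c ↔ ∀ i, |x i| ≤ c := by
  rw [PiLp.norm_toLp, pi_norm_le_iff_of_nonneg hc]
  rfl

theorem abs_apply_le_norm_toLp_top (x : ι → ℝ) (i : ι) : |x i| ≤ ‖WithLp.toLp ∞ x‖ :=
  PiLp.norm_apply_le (WithLp.toLp ∞ x) i

theorem norm_toLp_le_of_sum_posPart_sub_le {r : ℝ≥0∞} (hr : 1 ≤ r) {x y : ι → ℝ}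
    (hx : ∀ i, 0 ≤ x i) (hy : ∀ i, 0 ≤ y i)
    (h : ∀ t, 0 ≤ t → ∑ i, max (x i - t) 0 ≤ ∑ i, max (y i - t) 0) :
    ‖WithLp.toLp r x‖ ≤ ‖WithLp.toLp r y‖ := by
  rcases eq_or_ne r ∞ with rfl | hr_top
  · set t := ‖WithLp.toLp ∞ y‖
    have hsum : ∑ i, max (x i - t) 0 ≤ 0 := (h t (norm_nonneg _)).trans_eq <|
      Finset.sum_eq_zero fun i _ => max_eq_right <| sub_nonpos.mpr <|
        (le_abs_self _).trans (abs_apply_le_norm_toLp_top y i)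
    refine (norm_toLp_top_le_iff (norm_nonneg _)).mpr fun i => ?_
    rw [abs_of_nonneg (hx i), ← sub_nonpos]
    exact (le_max_left _ 0).trans ((Finset.single_le_sum (f := fun i => max (x i - t) 0)
      (fun j _ => le_max_right _ _) (Finset.mem_univ i)).trans hsum)
  · have hr1 : 1 ≤ r.toReal := by simpa using ENNReal.toReal_mono hr_top hr
    simp only [norm_toLp_eq_sum_rpow (one_pos.trans_le hr1), abs_of_nonneg (hx _),
      abs_of_nonneg (hy _)]
    exact Real.rpow_le_rpow (Finset.sum_nonneg fun i _ => Real.rpow_nonneg (hx i) _)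
      (sum_rpow_le_of_sum_posPart_sub_le hx hy h hr1) (by positivity)

theorem norm_toLp_le_of_forall_exists {r : ℝ≥0∞} (hr : r ≠ 0) {x : ι → ℝ} {y : κ → ℝ} (e : κ → ι)
    (h : ∀ i, x i ≠ 0 → ∃ j, e j = i ∧ |x i| ≤ |y j|) :
    ‖WithLp.toLp r x‖ ≤ ‖WithLp.toLp r y‖ := by
  classical
  rcases eq_or_ne r ∞ with rfl | hr_top
  · refine (norm_toLp_top_le_iff (norm_nonneg _)).mpr fun i => ?_
    rcases eq_or_ne (x i) 0 with hi | hi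
    · simp only [hi, abs_zero, norm_nonneg]
    · obtain ⟨j, -, hj⟩ := h i hi
      exact hj.trans (abs_apply_le_norm_toLp_top y j)
  · have hr0 : 0 < r.toReal := ENNReal.toReal_pos hr hr_top
    simp only [norm_toLp_eq_sum_rpow hr0]
    gcongr
    rw [← Finset.sum_fiberwise _ e fun j => |y j| ^ r.toReal]
    refine Finset.sum_le_sum fun i _ => ?_
    rcases eq_or_ne (x i) 0 with hi | hi
    · rw [hi, abs_zero, Real.zero_rpow hr0.ne']
      positivity
    · obtain ⟨j, hji, hj⟩ := h i hi
      refine (Real.rpow_le_rpow (abs_nonneg _) hj hr0.le).trans ?_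
      exact Finset.single_le_sum (f := fun j => |y j| ^ r.toReal) (fun j _ => by positivity)
        (Finset.mem_filter.mpr ⟨Finset.mem_univ j, hji⟩)

theorem norm_toLp_mono {r : ℝ≥0∞} (hr : r ≠ 0) {x y : ι → ℝ} (h : ∀ i, |x i| ≤ |y i|) :
    ‖WithLp.toLp r x‖ ≤ ‖WithLp.toLp r y‖ :=
  norm_toLp_le_of_forall_exists hr id fun i _ => ⟨i, rfl, h i⟩

theorem norm_toLp_comp_equiv {r : ℝ≥0∞} (hr : r ≠ 0) (e : κ ≃ ι) (x : ι → ℝ) :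
    ‖WithLp.toLp r (x ∘ e)‖ = ‖WithLp.toLp r x‖ :=
  (norm_toLp_le_of_forall_exists hr e.symm fun j _ => ⟨e j, e.symm_apply_apply j, le_rfl⟩).antisymm
    (norm_toLp_le_of_forall_exists hr e fun i _ =>
      ⟨e.symm i, e.apply_symm_apply i, by
        rw [e.apply_symm_apply]⟩)

theorem norm_toLp_fin_add_le {r : ℝ≥0∞} [Fact (1 ≤ r)] {a b : ℕ} (x : Fin (a + b) → ℝ) :
    ‖WithLp.toLp r x‖ ≤
      ‖WithLp.toLp r (x ∘ Fin.castAdd b)‖ + ‖WithLp.toLp r (x ∘ Fin.natAdd a)‖ := by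
  have hr : r ≠ 0 := (one_pos.trans_le Fact.out).ne'
  have hx : x = Fin.append (x ∘ Fin.castAdd b) 0 + Fin.append 0 (x ∘ Fin.natAdd a) := by
    ext i
    induction i using Fin.addCases <;> simp
  conv_lhs => rw [hx, WithLp.toLp_add]
  refine (norm_add_le _ _).trans (add_le_add ?_ ?_)
  · refine norm_toLp_le_of_forall_exists hr (Fin.castAdd b) fun i hi => ?_
    induction i using Fin.addCases with
    | left i => exact ⟨i, rfl, by simp⟩
    | right i => simp at hi
  · refine norm_toLp_le_of_forall_exists hr (Fin.natAdd a) fun i hi => ?_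
    induction i using Fin.addCases with
    | left i => simp at hi
    | right i => exact ⟨i, rfl, by simp⟩

theorem norm_toLp_sq {p : ℝ≥0∞} (hp : p ≠ 0) (x : ι → ℝ) :
    ‖WithLp.toLp p x‖ ^ 2 = ‖WithLp.toLp (p / 2) fun i => x i ^ 2‖ := by
  rcases eq_or_ne p ∞ with rfl | hp_top
  · rw [ENNReal.top_div_of_ne_top ENNReal.ofNat_ne_top]
    refine le_antisymm ?_ ((norm_toLp_top_le_iff (sq_nonneg _)).mpr fun i => ?_)
    · rw [← Real.le_sqrt (norm_nonneg _) (norm_nonneg _)]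
      refine (norm_toLp_top_le_iff (Real.sqrt_nonneg _)).mpr fun i => Real.abs_le_sqrt ?_
      exact (le_abs_self _).trans (abs_apply_le_norm_toLp_top (fun i => x i ^ 2) i)
    · rw [abs_pow]
      exact pow_le_pow_left₀ (abs_nonneg _) (abs_apply_le_norm_toLp_top x i) 2
  · have hp0 : 0 < p.toReal := ENNReal.toReal_pos hp hp_top
    have hp2 : (p / 2).toReal = p.toReal / 2 := by simp
    rw [norm_toLp_eq_sum_rpow hp0, norm_toLp_eq_sum_rpow (by rw [hp2]; positivity), hp2,
      ← Real.rpow_mul_natCast (by positivity)]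
    congr 1
    · refine Finset.sum_congr rfl fun i _ => ?_
      rw [abs_pow, ← Real.rpow_natCast_mul (abs_nonneg _)]
      congr 1
      push_cast
      ring
    · push_cast
      field_simp

end Majorization

section SingularValuesOfMatrices

open Polynomial
open scoped InnerProductSpace Matrix.Norms.L2Operator

variable {a l m n : ℕ}

theorem sval_eq_sqrt_of_charpoly {M : Matrix (Fin m) (Fin n) ℂ} {d : Fin n → ℝ} (hd : Antitone d)
    (h : (Mᴴ * M).charpoly = ∏ i, (X - C (d i : ℂ))) (i : Fin n) : sval M i = √(d i) := by
  set e := (isHermitian_conjTranspose_mul_self M).eigenvalues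
  have hroots : Finset.univ.val.map (fun i => (e i : ℂ)) =
      Finset.univ.val.map fun i => (d i : ℂ) := by
    refine (isHermitian_conjTranspose_mul_self M).roots_charpoly_eq_eigenvalues.symm.trans ?_
    rw [h, Polynomial.roots_prod _ _ (by simp [Finset.prod_ne_zero_iff, X_sub_C_ne_zero])]
    simp only [roots_X_sub_C, Multiset.bind_singleton]
  have hperm : (List.ofFn e).Perm (List.ofFn d) := by
    have := congrArg (Multiset.map Complex.re) hroots
    simpa [Multiset.map_map, Fin.univ_val_map, Function.comp_def] using this
  have hsort : List.insertionSort (· ≥ ·) ((List.ofFn e).map Real.sqrt) =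
      (List.ofFn d).map Real.sqrt := by
    refine List.Perm.eq_of_sortedGE List.sortedGE_insertionSort ?_
      ((List.perm_insertionSort _ _).trans (hperm.map _))
    rw [List.map_ofFn]
    exact (Real.sqrt_monotone.comp_antitone hd).sortedGE_ofFn
  rw [sval, hsort]
  simp

theorem sval_of_le (M : Matrix (Fin m) (Fin n) ℂ) {i : ℕ} (hi : n ≤ i) : sval M i = 0 :=
  List.getD_eq_default _ _ (by simpa using hi)

theorem sval_eq_singularValues (M : Matrix (Fin m) (Fin n) ℂ) (i : ℕ) :
    sval M i = M.toEuclideanLin.singularValues i := by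
  set T := M.toEuclideanLin
  rcases lt_or_ge i n with hi | hi
  · have hcharpoly : (Mᴴ * M).charpoly = (T.adjoint ∘ₗ T).charpoly := by
      rw [← Matrix.toEuclideanLin_conjTranspose_eq_adjoint, ← Matrix.toLpLin_mul_same,
        Matrix.toLpLin_eq_toLin, Matrix.charpoly_toLin]
    have hn : Module.finrank ℂ (EuclideanSpace ℂ (Fin n)) = n := finrank_euclideanSpace_fin
    rw [T.singularValues_of_lt hn hi]
    exact sval_eq_sqrt_of_charpoly (T.isSymmetric_adjoint_comp_self.eigenvalues_antitone hn)
      (hcharpoly.trans (T.isSymmetric_adjoint_comp_self.charpoly_eq hn)) ⟨i, hi⟩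
  · rw [sval_of_le M hi, T.singularValues_of_finrank_le (by simpa using hi)]

theorem sval_nonneg (M : Matrix (Fin m) (Fin n) ℂ) (i : ℕ) : 0 ≤ sval M i := by
  rw [sval_eq_singularValues]
  exact LinearMap.singularValues_nonneg _ i

theorem sval_antitone (M : Matrix (Fin m) (Fin n) ℂ) : Antitone (sval M) := by
  simpa only [← funext (sval_eq_singularValues M)] using M.toEuclideanLin.singularValues_antitone

theorem exists_perm_sval_eq_sqrt {M : Matrix (Fin m) (Fin n) ℂ} {d : Fin n → ℝ}
    (h : Mᴴ * M = diagonal fun i => (d i : ℂ)) :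
    ∃ e : Equiv.Perm (Fin n), ∀ i : Fin n, sval M i = √(d (e i)) := by
  set e := Tuple.sort fun i => -d i
  have he : Antitone (d ∘ e) := fun i j hij =>
    neg_le_neg_iff.mp (Tuple.monotone_sort (fun i => -d i) hij)
  refine ⟨e, sval_eq_sqrt_of_charpoly he ?_⟩
  rw [h, charpoly_diagonal]
  exact (Equiv.prod_comp e fun i => X - C (d i : ℂ)).symm

theorem norm_toEuclideanLin_le (M : Matrix (Fin m) (Fin n) ℂ) (x : EuclideanSpace ℂ (Fin n)) :
    ‖M.toEuclideanLin x‖ ≤ ‖M‖ * ‖x‖ :=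
  M.l2_opNorm_mulVec x

theorem sval_mul_le_left (B : Matrix (Fin l) (Fin m) ℂ) (A : Matrix (Fin m) (Fin n) ℂ) (i : ℕ) :
    sval (B * A) i ≤ ‖B‖ * sval A i := by
  rw [sval_eq_singularValues, sval_eq_singularValues, Matrix.toLpLin_mul_same]
  exact singularValues_comp_le_mul_left _ (norm_nonneg B) (norm_toEuclideanLin_le B) i

theorem sval_mul_le_right (A : Matrix (Fin l) (Fin m) ℂ) (C : Matrix (Fin m) (Fin n) ℂ) (i : ℕ) :
    sval (A * C) i ≤ sval A i * ‖C‖ := by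
  rw [sval_eq_singularValues, sval_eq_singularValues, Matrix.toLpLin_mul_same]
  exact singularValues_comp_le_mul_right _ (norm_nonneg C) (norm_toEuclideanLin_le C) i

theorem sum_posPart_sq_sval_sub_le {A : Matrix (Fin m) (Fin n) ℂ} {B : Matrix (Fin l) (Fin n) ℂ}
    {N : Matrix (Fin a) (Fin n) ℂ} (h : Aᴴ * A = Bᴴ * B + Nᴴ * N) (t : ℝ) :
    ∑ i : Fin n, max (sval A i ^ 2 - sval B i ^ 2 - t) 0 ≤
      ∑ i : Fin n, max (sval N i ^ 2 - t) 0 := by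
  simp only [sval_eq_singularValues]
  refine sum_posPart_sq_singularValues_sub_le (fun x => ?_)
    (finrank_euclideanSpace_fin (𝕜 := ℂ)) t
  have hgram := congrArg (fun G => RCLike.re ⟪G.toEuclideanLin x, x⟫_ℂ) h
  simpa only [map_add, LinearMap.add_apply, inner_add_left, Matrix.toLpLin_mul_same,
    Matrix.toEuclideanLin_conjTranspose_eq_adjoint, re_inner_adjoint_comp_self_apply]
    using hgram.le

theorem l2_opNorm_le_one_of_conjTranspose_mul_self {Q : Matrix (Fin m) (Fin n) ℂ}
    (hQ : Qᴴ * Q = 1) : ‖Q‖ ≤ 1 := by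
  rw [← abs_of_nonneg (norm_nonneg Q), abs_le_one_iff_mul_self_le_one,
    ← l2_opNorm_conjTranspose_mul_self, hQ]
  exact IsStarProjection.norm_le _ (.one _)

theorem isStarProjection_one_sub_mul_conjTranspose {Q : Matrix (Fin m) (Fin n) ℂ}
    (hQ : Qᴴ * Q = 1) : IsStarProjection (1 - Q * Qᴴ) := by
  refine IsStarProjection.one_sub ⟨?_, ?_⟩
  · rw [IsIdempotentElem, Matrix.mul_assoc, ← Matrix.mul_assoc Qᴴ, hQ, Matrix.one_mul]
  · exact isHermitian_mul_conjTranspose_self Q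

theorem sval_conjTranspose_mul_le {Q : Matrix (Fin m) (Fin l) ℂ} (hQ : Qᴴ * Q = 1)
    (A : Matrix (Fin m) (Fin n) ℂ) (i : ℕ) : sval (Qᴴ * A) i ≤ sval A i :=
  (sval_mul_le_left Qᴴ A i).trans <| mul_le_of_le_one_left (sval_nonneg A i) <|
    (l2_opNorm_conjTranspose Q).trans_le (l2_opNorm_le_one_of_conjTranspose_mul_self hQ)

theorem sval_mul_le_of_isometry {V : Matrix (Fin m) (Fin n) ℂ} (hV : Vᴴ * V = 1)
    (A : Matrix (Fin l) (Fin m) ℂ) (i : ℕ) : sval (A * V) i ≤ sval A i :=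
  (sval_mul_le_right A V i).trans <| mul_le_of_le_one_right (sval_nonneg A i)
    (l2_opNorm_le_one_of_conjTranspose_mul_self hV)

theorem sval_mul_of_isometry {U : Matrix (Fin l) (Fin m) ℂ} (hU : Uᴴ * U = 1)
    (M : Matrix (Fin m) (Fin n) ℂ) (i : ℕ) : sval (U * M) i = sval M i := by
  refine le_antisymm ((sval_mul_le_left U M i).trans (mul_le_of_le_one_left (sval_nonneg M i)
    (l2_opNorm_le_one_of_conjTranspose_mul_self hU))) ?_
  calc sval M i = sval (Uᴴ * (U * M)) i := by rw [← Matrix.mul_assoc, hU, Matrix.one_mul]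
    _ ≤ sval (U * M) i := sval_conjTranspose_mul_le hU _ i

theorem sval_mul_conjTranspose_of_isometry {V : Matrix (Fin l) (Fin n) ℂ} (hV : Vᴴ * V = 1)
    (M : Matrix (Fin m) (Fin n) ℂ) (i : ℕ) : sval (M * Vᴴ) i = sval M i := by
  refine le_antisymm ((sval_mul_le_right M Vᴴ i).trans (mul_le_of_le_one_right (sval_nonneg M i)
    ((l2_opNorm_conjTranspose V).trans_le (l2_opNorm_le_one_of_conjTranspose_mul_self hV)))) ?_
  calc sval M i = sval (M * Vᴴ * V) i := by rw [Matrix.mul_assoc, hV, Matrix.mul_one]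
    _ ≤ sval (M * Vᴴ) i := sval_mul_le_of_isometry hV _ i

theorem conjTranspose_mul_self_eq_add_of_isometry {Q : Matrix (Fin m) (Fin l) ℂ} (hQ : Qᴴ * Q = 1)
    (A : Matrix (Fin m) (Fin n) ℂ) :
    Aᴴ * A = (Qᴴ * A)ᴴ * (Qᴴ * A) + ((1 - Q * Qᴴ) * A)ᴴ * ((1 - Q * Qᴴ) * A) := by
  have hproj := isStarProjection_one_sub_mul_conjTranspose hQ
  have hgram : ((1 - Q * Qᴴ) * A)ᴴ * ((1 - Q * Qᴴ) * A) = Aᴴ * ((1 - Q * Qᴴ) * A) := by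
    rw [conjTranspose_mul, ← star_eq_conjTranspose (1 - Q * Qᴴ), hproj.isSelfAdjoint.star_eq,
      Matrix.mul_assoc, ← Matrix.mul_assoc (1 - Q * Qᴴ), hproj.isIdempotentElem.eq]
  rw [hgram, conjTranspose_mul, conjTranspose_conjTranspose]
  simp only [Matrix.sub_mul, Matrix.mul_sub, Matrix.one_mul, Matrix.mul_assoc, add_sub_cancel]

end SingularValuesOfMatrices

section SchattenNorms

variable {a b l m n : ℕ}

theorem schatten_eq_norm_toLp {p : ℝ≥0∞} (hp : p ≠ 0) (M : Matrix (Fin m) (Fin n) ℂ) :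
    schatten p M = ‖WithLp.toLp p fun i : Fin n => sval M i‖ := by
  rcases eq_or_ne p ∞ with rfl | hp_top
  · rw [schatten, if_pos rfl]
    refine le_antisymm ?_ ((norm_toLp_top_le_iff (sval_nonneg M 0)).mpr fun i => ?_)
    · rcases n.eq_zero_or_pos with hn | hn
      · exact (sval_of_le M hn.le).trans_le (norm_nonneg _)
      · exact (le_abs_self _).trans
          (abs_apply_le_norm_toLp_top (fun i : Fin n => sval M i) ⟨0, hn⟩)
    · rw [abs_of_nonneg (sval_nonneg M i)]
      exact sval_antitone M (Nat.zero_le i)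
  · simp only [schatten, if_neg hp_top, norm_toLp_eq_sum_rpow (ENNReal.toReal_pos hp hp_top),
      abs_of_nonneg (sval_nonneg M _), Finset.sum_range]

theorem schatten_nonneg (p : ℝ≥0∞) (M : Matrix (Fin m) (Fin n) ℂ) : 0 ≤ schatten p M := by
  rw [schatten]
  split_ifs
  · exact sval_nonneg M 0
  · exact Real.rpow_nonneg (Finset.sum_nonneg fun i _ => Real.rpow_nonneg (sval_nonneg M i) _) _

theorem schatten_le_mul_schatten {p : ℝ≥0∞} [Fact (1 ≤ p)] {M : Matrix (Fin m) (Fin n) ℂ}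
    {N : Matrix (Fin l) (Fin n) ℂ} {c : ℝ} (hc : 0 ≤ c) (h : ∀ i, sval M i ≤ c * sval N i) :
    schatten p M ≤ c * schatten p N := by
  have hp : p ≠ 0 := (one_pos.trans_le Fact.out).ne'
  have hsmul : ‖WithLp.toLp p fun i : Fin n => c * sval N i‖ =
      c * ‖WithLp.toLp p fun i : Fin n => sval N i‖ := by
    nth_rw 2 [← Real.norm_of_nonneg hc]
    exact norm_smul c (WithLp.toLp p fun i : Fin n => sval N i)
  rw [schatten_eq_norm_toLp hp, schatten_eq_norm_toLp hp, ← hsmul]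
  refine norm_toLp_mono hp fun i => ?_
  rw [abs_of_nonneg (sval_nonneg M i)]
  exact (h i).trans (le_abs_self _)

theorem norm_toLp_sq_sval_sub_le {p : ℝ≥0∞} (hp : 2 ≤ p) {Q : Matrix (Fin m) (Fin l) ℂ}
    (hQ : Qᴴ * Q = 1) (A : Matrix (Fin m) (Fin n) ℂ) :
    ‖WithLp.toLp (p / 2) fun i : Fin n => sval A i ^ 2 - sval (Qᴴ * A) i ^ 2‖ ≤
      schatten p ((1 - Q * Qᴴ) * A) ^ 2 := by
  have hp0 : p ≠ 0 := (two_pos.trans_le hp).ne'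
  have hp2 : 1 ≤ p / 2 := by
    rwa [ENNReal.le_div_iff_mul_le (by simp) (by simp), one_mul]
  rw [schatten_eq_norm_toLp hp0, norm_toLp_sq hp0]
  refine norm_toLp_le_of_sum_posPart_sub_le hp2 (fun i => ?_) (fun i => sq_nonneg _) fun t _ =>
    sum_posPart_sq_sval_sub_le (conjTranspose_mul_self_eq_add_of_isometry hQ A) t
  exact sub_nonneg.mpr (pow_le_pow_left₀ (sval_nonneg _ i) (sval_conjTranspose_mul_le hQ A i) 2)

theorem diagRect_sub (σ τ : ℕ → ℝ) (off a b : ℕ) :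
    diagRect σ off a b - diagRect τ off a b = diagRect (fun i => σ i - τ i) off a b := by
  ext i j
  simp only [diagRect, Matrix.sub_apply, Matrix.of_apply]
  split_ifs <;> simp

theorem diagRect_mul_eq_diagonal_mul (σ τ : ℕ → ℝ) (off a b : ℕ) :
    diagRect (σ * τ) off a b =
      (diagonal fun i : Fin a => (σ (off + i) : ℂ)) * diagRect τ off a b := by
  ext i j
  rw [Matrix.diagonal_mul]
  simp only [diagRect, Matrix.of_apply]
  split_ifs <;> simp

theorem diagRect_eq_diagonal (σ : ℕ → ℝ) (a : ℕ) :
    diagRect σ 0 a a = diagonal fun i : Fin a => (σ i : ℂ) := by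
  ext i j
  simp [diagRect, diagonal_apply, Fin.ext_iff]

theorem conjTranspose_diagRect_mul_diagRect (σ τ : ℕ → ℝ) (off a b : ℕ) :
    (diagRect σ off a b)ᴴ * diagRect τ off a b =
      diagonal fun j : Fin b =>
        ((if (j : ℕ) < a then σ (off + j) * τ (off + j) else 0 : ℝ) : ℂ) := by
  ext i j
  simp only [Matrix.mul_apply, diagonal_apply, diagRect, conjTranspose_apply, of_apply]
  split_ifs with hij hi
  · subst hij
    rw [Finset.sum_eq_single ⟨i, hi⟩ (fun r _ hr => by simp [Fin.ext_iff.not.mp hr]) (by simp)]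
    simp
  · exact Finset.sum_eq_zero fun r _ => by simp [show (r : ℕ) ≠ i by lia]
  · refine Finset.sum_eq_zero fun r _ => ?_
    rcases eq_or_ne (r : ℕ) i with hr | hr
    · simp [show (r : ℕ) ≠ j by lia]
    · simp [hr]

theorem diagRect_mul_conjTranspose_mul_diagRect (σ τ : ℕ → ℝ) (a b : ℕ) :
    diagRect σ 0 a b * (diagRect σ 0 a b)ᴴ * diagRect τ 0 a b = diagRect (σ ^ 2 * τ) 0 a b := by
  rw [Matrix.mul_assoc, conjTranspose_diagRect_mul_diagRect]
  ext i j
  rw [Matrix.mul_diagonal]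
  simp only [diagRect, of_apply, zero_add, Pi.mul_apply, Pi.pow_apply]
  split_ifs with hij hj
  · rw [hij]
    push_cast
    ring
  · lia
  · simp
  · simp

theorem schatten_diagRect {p : ℝ≥0∞} (hp : p ≠ 0) (τ : ℕ → ℝ) (off a b : ℕ) :
    schatten p (diagRect τ off a b) =
      ‖WithLp.toLp p fun j : Fin b => if (j : ℕ) < a then τ (off + j) else 0‖ := by
  obtain ⟨e, he⟩ := exists_perm_sval_eq_sqrt (conjTranspose_diagRect_mul_diagRect τ τ off a b)
  set d : Fin b → ℝ := fun j => if (j : ℕ) < a then τ (off + j) else 0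
  rw [schatten_eq_norm_toLp hp, ← norm_toLp_comp_equiv hp e d]
  have habs : ∀ i : Fin b, |sval (diagRect τ off a b) i| = |(d ∘ e) i| := fun i => by
    rw [he, abs_of_nonneg (Real.sqrt_nonneg _)]
    dsimp only [d, Function.comp_apply]
    split_ifs
    · exact Real.sqrt_mul_self_eq_abs _
    · simp
  exact (norm_toLp_mono hp fun i => (habs i).le).antisymm (norm_toLp_mono hp fun i => (habs i).ge)

theorem sval_diagRect {σ : ℕ → ℝ} (hσ0 : ∀ i, 0 ≤ σ i) (hσ : Antitone σ) (a b i : ℕ) :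
    sval (diagRect σ 0 a b) i = if i < a ∧ i < b then σ i else 0 := by
  rcases lt_or_ge i b with hi | hi
  swap
  · rw [sval_of_le _ hi, if_neg (by lia)]
  have hd : Antitone fun j : Fin b => if (j : ℕ) < a then σ (0 + j) * σ (0 + j) else 0 := by
    intro i j hij
    dsimp only
    have : (i : ℕ) ≤ j := hij
    split_ifs
    · exact mul_self_le_mul_self (hσ0 _) (hσ (by lia))
    · lia
    · exact mul_self_nonneg _
    · rfl
  have hcharpoly := congrArg charpoly (conjTranspose_diagRect_mul_diagRect σ σ 0 a b)
  rw [charpoly_diagonal] at hcharpoly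
  rw [sval_eq_sqrt_of_charpoly hd hcharpoly ⟨i, hi⟩]
  simp only [hi, and_true, zero_add]
  split_ifs
  · exact Real.sqrt_mul_self (hσ0 i)
  · exact Real.sqrt_zero

theorem sval_mul_diagRect_mul_conjTranspose {U : Matrix (Fin m) (Fin a) ℂ}
    {V : Matrix (Fin n) (Fin b) ℂ} (hU : Uᴴ * U = 1) (hV : Vᴴ * V = 1) {σ : ℕ → ℝ}
    (hσ0 : ∀ i, 0 ≤ σ i) (hσ : Antitone σ) (i : ℕ) :
    sval (U * diagRect σ 0 a b * Vᴴ) i = if i < a ∧ i < b then σ i else 0 := by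
  rw [sval_mul_conjTranspose_of_isometry hV, sval_mul_of_isometry hU, sval_diagRect hσ0 hσ]

end SchattenNorms

section Blocks

variable {a b k m n m₂ n₂ : ℕ}

theorem mul_conjTranspose_eq_colsL_add_colsR (M : Matrix (Fin a) (Fin (k + n₂)) ℂ)
    (V : Matrix (Fin b) (Fin (k + n₂)) ℂ) :
    M * Vᴴ = colsL M * (colsL V)ᴴ + colsR M * (colsR V)ᴴ := by
  ext i j
  simp [Matrix.mul_apply, Fin.sum_univ_add, colsL, colsR]

theorem colsL_mul_diagRect (U : Matrix (Fin a) (Fin (k + m₂)) ℂ) (τ : ℕ → ℝ) :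
    colsL (U * diagRect τ 0 (k + m₂) (k + n₂)) =
      colsL U * diagonal fun i : Fin k => (τ i : ℂ) := by
  ext i j
  rw [Matrix.mul_diagonal]
  simp only [colsL, submatrix_apply, id, Matrix.mul_apply, diagRect, of_apply]
  rw [Finset.sum_eq_single (Fin.castAdd m₂ j)
    (fun r _ hr => by simp [show (r : ℕ) ≠ j from Fin.ext_iff.not.mp hr]) (by simp)]
  simp

theorem colsR_mul_diagRect (U : Matrix (Fin a) (Fin (k + m₂)) ℂ) (τ : ℕ → ℝ) :
    colsR (U * diagRect τ 0 (k + m₂) (k + n₂)) = colsR U * diagRect τ k m₂ n₂ := by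
  ext i j
  simp only [colsR, submatrix_apply, id, Matrix.mul_apply, diagRect, of_apply, Fin.sum_univ_add]
  rw [Finset.sum_eq_zero fun r _ => by simp [show (r : ℕ) ≠ k + j by lia], zero_add]
  simp

theorem mul_diagRect_mul_conjTranspose_eq_add (U : Matrix (Fin m) (Fin (k + m₂)) ℂ)
    (V : Matrix (Fin n) (Fin (k + n₂)) ℂ) (τ : ℕ → ℝ) :
    U * diagRect τ 0 (k + m₂) (k + n₂) * Vᴴ =
      colsL U * (diagonal fun i : Fin k => (τ i : ℂ)) * (colsL V)ᴴ +
        colsR U * diagRect τ k m₂ n₂ * (colsR V)ᴴ := by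
  rw [mul_conjTranspose_eq_colsL_add_colsR, colsL_mul_diagRect, colsR_mul_diagRect]

theorem colsL_conjTranspose_mul_colsL {V : Matrix (Fin a) (Fin (k + n₂)) ℂ} (hV : Vᴴ * V = 1) :
    (colsL V)ᴴ * colsL V = 1 :=
  (congrArg (submatrix · (Fin.castAdd n₂) (Fin.castAdd n₂)) hV).trans
    (submatrix_one _ (Fin.castAdd_injective k n₂))

theorem colsR_conjTranspose_mul_colsR {V : Matrix (Fin a) (Fin (k + n₂)) ℂ} (hV : Vᴴ * V = 1) :
    (colsR V)ᴴ * colsR V = 1 :=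
  (congrArg (submatrix · (Fin.natAdd k) (Fin.natAdd k)) hV).trans
    (submatrix_one _ (Fin.natAdd_injective n₂ k))

theorem colsR_conjTranspose_mul_colsL {V : Matrix (Fin a) (Fin (k + n₂)) ℂ} (hV : Vᴴ * V = 1) :
    (colsR V)ᴴ * colsL V = 0 := by
  refine (congrArg (submatrix · (Fin.natAdd k) (Fin.castAdd n₂)) hV).trans ?_
  ext i j
  exact one_apply_ne (Fin.ext_iff.not.mpr (by simp; lia))

open scoped ComplexOrder in
theorem mul_rpinv {M : Matrix (Fin a) (Fin b) ℂ} (hM : M.rank = a) : M * rpinv M = 1 := by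
  have hsurj : Function.Surjective (M * Mᴴ).mulVec := by
    refine LinearMap.range_eq_top.mp
      (Submodule.eq_top_of_finrank_eq (S := (M * Mᴴ).mulVecLin.range) ?_)
    rw [Module.finrank_fin_fun]
    exact (Matrix.rank_self_mul_conjTranspose M).trans hM
  rw [rpinv, ← Matrix.mul_assoc, Matrix.mul_nonsing_inv]
  exact (isUnit_iff_isUnit_det _).mp (mulVec_surjective_iff_isUnit.mp hsurj)

end Blocks

section SubspaceIteration

open scoped Matrix.Norms.L2Operator

variable {k l m n s m₂ n₂ : ℕ} {A : Matrix (Fin m) (Fin n) ℂ} {U : Matrix (Fin m) (Fin (k + m₂)) ℂ}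
  {V : Matrix (Fin n) (Fin (k + n₂)) ℂ} {σ : ℕ → ℝ}

theorem mul_conjTranspose_pow_mul_eq {a b : ℕ} {U : Matrix (Fin m) (Fin a) ℂ}
    {V : Matrix (Fin n) (Fin b) ℂ} (hU : Uᴴ * U = 1) (hV : Vᴴ * V = 1)
    (hA : A = U * diagRect σ 0 a b * Vᴴ) (q : ℕ) :
    (A * Aᴴ) ^ q * A = U * diagRect (σ ^ (2 * q) * σ) 0 a b * Vᴴ := by
  induction q with
  | zero => simpa using hA
  | succ q ih =>
    rw [pow_succ', Matrix.mul_assoc, ih, show σ ^ (2 * (q + 1)) * σ = σ ^ 2 * (σ ^ (2 * q) * σ) by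
      ring, ← diagRect_mul_conjTranspose_mul_diagRect σ]
    set D := diagRect (σ ^ (2 * q) * σ) 0 a b
    rw [hA]
    simp only [conjTranspose_mul, conjTranspose_conjTranspose, Matrix.mul_assoc]
    rw [← Matrix.mul_assoc Vᴴ V, hV, Matrix.one_mul, ← Matrix.mul_assoc Uᴴ U, hU, Matrix.one_mul]

theorem mul_colsL_eq (hV : Vᴴ * V = 1) (hA : A = U * diagRect σ 0 (k + m₂) (k + n₂) * Vᴴ) :
    A * colsL V = colsL U * diagonal fun i : Fin k => (σ i : ℂ) := by
  rw [hA, mul_diagRect_mul_conjTranspose_eq_add, Matrix.add_mul, Matrix.mul_assoc _ (colsL V)ᴴ,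
    Matrix.mul_assoc _ (colsR V)ᴴ, colsL_conjTranspose_mul_colsL hV,
    colsR_conjTranspose_mul_colsL hV, Matrix.mul_one, Matrix.mul_zero, add_zero]

theorem sval_mul_colsL (hU : Uᴴ * U = 1) (hV : Vᴴ * V = 1)
    (hA : A = U * diagRect σ 0 (k + m₂) (k + n₂) * Vᴴ) (hσ0 : ∀ i, 0 ≤ σ i) (hσ : Antitone σ)
    (i : Fin k) : sval (A * colsL V) i = σ i := by
  rw [mul_colsL_eq hV hA, sval_mul_of_isometry (colsL_conjTranspose_mul_colsL hU),
    ← diagRect_eq_diagonal, sval_diagRect hσ0 hσ, if_pos ⟨i.isLt, i.isLt⟩]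

variable {Ω : Matrix (Fin n) (Fin s) ℂ} {Q : Matrix (Fin m) (Fin l) ℂ}
  {R : Matrix (Fin l) (Fin s) ℂ}

/-- With `X = Σ_⊥ Ω₂ Ω₁†`, the right-hand side is `A V_k + U_⊥ Σ_⊥^{2q} X Σ_k^{-2q}`. -/
theorem sketch_mul_rpinv_mul_diagonal (q : ℕ) (hU : Uᴴ * U = 1) (hV : Vᴴ * V = 1)
    (hA : A = U * diagRect σ 0 (k + m₂) (k + n₂) * Vᴴ) (hσ : ∀ i < k, σ i ≠ 0)
    (hΩ : ((colsL V)ᴴ * Ω).rank = k) :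
    (A * Aᴴ) ^ q * A * Ω * rpinv ((colsL V)ᴴ * Ω) *
        (diagonal fun i : Fin k => (((σ i ^ (2 * q))⁻¹ : ℝ) : ℂ)) =
      A * colsL V + colsR U * (diagonal fun i : Fin m₂ => ((σ (k + i) ^ (2 * q) : ℝ) : ℂ)) *
        (diagRect σ k m₂ n₂ * ((colsR V)ᴴ * Ω * rpinv ((colsL V)ᴴ * Ω))) *
        (diagonal fun i : Fin k => (((σ i ^ (2 * q))⁻¹ : ℝ) : ℂ)) := by
  have hpinv := mul_rpinv hΩ
  set Z := rpinv ((colsL V)ᴴ * Ω)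
  set C : Matrix (Fin k) (Fin k) ℂ := diagonal fun i : Fin k => (((σ i ^ (2 * q))⁻¹ : ℝ) : ℂ)
    with hC
  have hhead : (diagonal fun i : Fin k => (((σ ^ (2 * q) * σ) i : ℝ) : ℂ)) *
      ((colsL V)ᴴ * (Ω * (Z * C))) = diagonal fun i : Fin k => (σ i : ℂ) := by
    rw [← Matrix.mul_assoc _ Ω, ← Matrix.mul_assoc _ Z, hpinv, Matrix.one_mul, hC,
      diagonal_mul_diagonal]
    congr 1
    ext i
    have := hσ i i.isLt
    rw [← Complex.ofReal_mul, Pi.mul_apply, Pi.pow_apply]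
    congr 1
    field_simp
  rw [mul_conjTranspose_pow_mul_eq hU hV hA, mul_diagRect_mul_conjTranspose_eq_add,
    diagRect_mul_eq_diagonal_mul, mul_colsL_eq hV hA, ← hhead]
  simp only [Matrix.add_mul, Matrix.mul_assoc, Pi.pow_apply]

theorem one_sub_mul_conjTranspose_mul_self (hQ : Qᴴ * Q = 1) : (1 - Q * Qᴴ) * Q = 0 := by
  rw [Matrix.sub_mul, Matrix.mul_assoc, hQ, Matrix.one_mul, Matrix.mul_one, sub_self]

theorem l2_opNorm_diagonal_ofReal_le {a : ℕ} {d : Fin a → ℝ} {c : ℝ} (hc : 0 ≤ c)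
    (h0 : ∀ i, 0 ≤ d i) (hd : ∀ i, d i ≤ c) :
    ‖(diagonal fun i => (d i : ℂ) : Matrix (Fin a) (Fin a) ℂ)‖ ≤ c := by
  rw [l2_opNorm_diagonal, pi_norm_le_iff_of_nonneg hc]
  exact fun i => (Complex.norm_of_nonneg (h0 i)).trans_le (hd i)

theorem schatten_residual_le {p : ℝ≥0∞} [Fact (1 ≤ p)] (q : ℕ) (hU : Uᴴ * U = 1) (hV : Vᴴ * V = 1)
    (hσ0 : ∀ i, 0 ≤ σ i) (hσ : Antitone σ) (hA : A = U * diagRect σ 0 (k + m₂) (k + n₂) * Vᴴ)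
    {c : ℝ} (hc : 0 < c) (hcσ : ∀ i < k, c ≤ σ i) (hΩ : ((colsL V)ᴴ * Ω).rank = k)
    (hQ : Qᴴ * Q = 1) (hQR : (A * Aᴴ) ^ q * A * Ω = Q * R) :
    schatten p ((1 - Q * Qᴴ) * (A * colsL V)) ≤ (σ k / c) ^ (2 * q) *
      schatten p (diagRect σ k m₂ n₂ * ((colsR V)ᴴ * Ω * rpinv ((colsL V)ᴴ * Ω))) := by
  have hσk := hσ0 k
  have hsketch := sketch_mul_rpinv_mul_diagonal q hU hV hA
    (fun i hi => (hc.trans_le (hcσ i hi)).ne') hΩ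
  rw [hQR] at hsketch
  set X := diagRect σ k m₂ n₂ * ((colsR V)ᴴ * Ω * rpinv ((colsL V)ᴴ * Ω))
  set S : Matrix (Fin m₂) (Fin m₂) ℂ :=
    diagonal fun i : Fin m₂ => ((σ (k + i) ^ (2 * q) : ℝ) : ℂ)
  set C : Matrix (Fin k) (Fin k) ℂ := diagonal fun i : Fin k => (((σ i ^ (2 * q))⁻¹ : ℝ) : ℂ)
  have hresidual : (1 - Q * Qᴴ) * (A * colsL V) = -((1 - Q * Qᴴ) * colsR U * S) * X * C := by
    have hzero : (1 - Q * Qᴴ) * (Q * R * rpinv ((colsL V)ᴴ * Ω) * C) = 0 := by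
      simp only [← Matrix.mul_assoc, one_sub_mul_conjTranspose_mul_self hQ, Matrix.zero_mul]
    rw [hsketch, Matrix.mul_add] at hzero
    simpa only [Matrix.neg_mul, Matrix.mul_assoc] using eq_neg_of_add_eq_zero_left hzero
  have hleft : ‖-((1 - Q * Qᴴ) * colsR U * S)‖ ≤ σ k ^ (2 * q) := by
    have hPU : ‖(1 - Q * Qᴴ) * colsR U‖ ≤ 1 := (l2_opNorm_mul _ _).trans <|
      mul_le_one₀ (IsStarProjection.norm_le _ (isStarProjection_one_sub_mul_conjTranspose hQ))
        (norm_nonneg _)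
        (l2_opNorm_le_one_of_conjTranspose_mul_self (colsR_conjTranspose_mul_colsR hU))
    have hS : ‖S‖ ≤ σ k ^ (2 * q) :=
      l2_opNorm_diagonal_ofReal_le (pow_nonneg hσk _) (fun i => pow_nonneg (hσ0 _) _)
        fun i => pow_le_pow_left₀ (hσ0 _) (hσ (Nat.le_add_right k i)) _
    rw [norm_neg]
    exact ((l2_opNorm_mul _ _).trans (mul_le_of_le_one_left (norm_nonneg _) hPU)).trans hS
  have hright : ‖C‖ ≤ (c ^ (2 * q))⁻¹ :=
    l2_opNorm_diagonal_ofReal_le (by positivity)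
      (fun i => inv_nonneg.mpr (pow_nonneg (hσ0 i) _)) fun i => by
        have := hcσ i i.isLt
        gcongr
  refine schatten_le_mul_schatten (by positivity) fun i => ?_
  have hX := sval_nonneg X i
  rw [hresidual]
  calc sval (-((1 - Q * Qᴴ) * colsR U * S) * X * C) i
      ≤ ‖-((1 - Q * Qᴴ) * colsR U * S)‖ * sval X i * ‖C‖ :=
        (sval_mul_le_right _ C i).trans (by gcongr; exact sval_mul_le_left _ X i)
    _ ≤ σ k ^ (2 * q) * sval X i * (c ^ (2 * q))⁻¹ := by gcongr
    _ = (σ k / c) ^ (2 * q) * sval X i := by rw [div_pow]; ring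

theorem sval_conjTranspose_mul_le_of_svd (hU : Uᴴ * U = 1) (hV : Vᴴ * V = 1)
    (hσ0 : ∀ i, 0 ≤ σ i) (hσ : Antitone σ) (hA : A = U * diagRect σ 0 (k + m₂) (k + n₂) * Vᴴ)
    (hQ : Qᴴ * Q = 1) (i : ℕ) : sval (Qᴴ * A) i ≤ σ i := by
  refine (sval_conjTranspose_mul_le hQ A i).trans ?_
  rw [hA, sval_mul_diagRect_mul_conjTranspose hU hV hσ0 hσ]
  split_ifs
  exacts [le_rfl, hσ0 i]

theorem norm_toLp_sq_sub_sval_le {p : ℝ≥0∞} (hp : 2 ≤ p) (hU : Uᴴ * U = 1) (hV : Vᴴ * V = 1)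
    (hσ0 : ∀ i, 0 ≤ σ i) (hσ : Antitone σ) (hA : A = U * diagRect σ 0 (k + m₂) (k + n₂) * Vᴴ)
    (hQ : Qᴴ * Q = 1) :
    ‖WithLp.toLp (p / 2) fun i : Fin k => (σ i - sval (Qᴴ * A) i) ^ 2‖ ≤
      schatten p ((1 - Q * Qᴴ) * (A * colsL V)) ^ 2 := by
  have hp2 : p / 2 ≠ 0 := ENNReal.div_ne_zero.mpr ⟨(two_pos.trans_le hp).ne', by simp⟩
  refine (norm_toLp_mono hp2 fun i => ?_).trans (norm_toLp_sq_sval_sub_le hp hQ (A * colsL V))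
  have hsub : sval (Qᴴ * (A * colsL V)) i ≤ sval (Qᴴ * A) i := by
    rw [← Matrix.mul_assoc]
    exact sval_mul_le_of_isometry (colsL_conjTranspose_mul_colsL hV) _ i
  have hσi := sval_conjTranspose_mul_le_of_svd hU hV hσ0 hσ hA hQ i
  have hs0 := sval_nonneg (Qᴴ * (A * colsL V)) i
  rw [sval_mul_colsL hU hV hA hσ0 hσ, abs_of_nonneg (sq_nonneg _)]
  refine le_trans ?_ (le_abs_self _)
  nlinarith

theorem hoffman_wielandt_schatten_sq_general (q : ℕ) (hU : Uᴴ * U = 1) (hV : Vᴴ * V = 1)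
    (hσ0 : ∀ i, 0 ≤ σ i) (hσ : Antitone σ) (hA : A = U * diagRect σ 0 (k + m₂) (k + n₂) * Vᴴ)
    {c : ℝ} (hc : 0 < c) (hcσ : ∀ i < k, c ≤ σ i) (hΩ : ((colsL V)ᴴ * Ω).rank = k)
    (hQ : Qᴴ * Q = 1) (hQR : (A * Aᴴ) ^ q * A * Ω = Q * R) {p : ℝ≥0∞} (hp : 2 ≤ p) :
    schatten p (diagRect σ 0 (k + m₂) (k + n₂) - diagRect (sval (Qᴴ * A)) 0 (k + m₂) (k + n₂)) ≤
      √(schatten p (diagRect σ k m₂ n₂) ^ 2 + (σ k / c) ^ (4 * q) *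
        schatten p (diagRect σ k m₂ n₂ * ((colsR V)ᴴ * Ω * rpinv ((colsL V)ᴴ * Ω))) ^ 2) := by
  have hp0 : p ≠ 0 := (two_pos.trans_le hp).ne'
  have : Fact (1 ≤ p) := ⟨one_le_two.trans hp⟩
  have : Fact (1 ≤ p / 2) := ⟨by rwa [ENNReal.le_div_iff_mul_le (by simp) (by simp), one_mul]⟩
  have hp2 : p / 2 ≠ 0 := (one_pos.trans_le Fact.out).ne'
  have hresidual := schatten_residual_le q hU hV hσ0 hσ hA hc hcσ hΩ hQ hQR (p := p)
  set X := diagRect σ k m₂ n₂ * ((colsR V)ᴴ * Ω * rpinv ((colsL V)ᴴ * Ω))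
  rw [diagRect_sub]
  refine Real.le_sqrt_of_sq_le ?_
  rw [schatten_diagRect hp0, norm_toLp_sq hp0]
  refine (norm_toLp_fin_add_le _).trans ?_
  rw [add_comm]
  refine add_le_add ?_ ?_
  · rw [schatten_diagRect hp0, norm_toLp_sq hp0]
    refine norm_toLp_mono hp2 fun i => ?_
    have ht0 := sval_nonneg (Qᴴ * A) (k + i)
    have htσ := sval_conjTranspose_mul_le_of_svd hU hV hσ0 hσ hA hQ (k + i)
    simp only [Function.comp_apply, Fin.val_natAdd, zero_add, Nat.add_lt_add_iff_left, abs_sq]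
    split_ifs
    · gcongr
      linarith
    · rfl
  · have hhead (i : Fin k) : (i : ℕ) < k + m₂ := by lia
    simp only [Function.comp_def, Fin.val_castAdd, hhead, if_true, zero_add]
    calc ‖WithLp.toLp (p / 2) fun i : Fin k => (σ i - sval (Qᴴ * A) i) ^ 2‖
      _ ≤ schatten p ((1 - Q * Qᴴ) * (A * colsL V)) ^ 2 :=
        norm_toLp_sq_sub_sval_le hp hU hV hσ0 hσ hA hQ
      _ ≤ ((σ k / c) ^ (2 * q) * schatten p X) ^ 2 := by
        gcongr
        exact schatten_nonneg _ _
      _ = (σ k / c) ^ (4 * q) * schatten p X ^ 2 := by ring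

end SubspaceIteration

/-- Hoffman–Wielandt type bound for the singular values, `p ≥ 2` version. -/
theorem hoffman_wielandt_schatten_sq
    {k m₂ n₂ ρ : ℕ} (q : ℕ) (hk : 1 ≤ k)
    (A : Matrix (Fin (k + m₂)) (Fin (k + n₂)) ℂ)
    (U : Matrix (Fin (k + m₂)) (Fin (k + m₂)) ℂ)
    (V : Matrix (Fin (k + n₂)) (Fin (k + n₂)) ℂ)
    (σ : ℕ → ℝ)
    (hU : Uᴴ * U = 1) (hU' : U * Uᴴ = 1)
    (hV : Vᴴ * V = 1) (hV' : V * Vᴴ = 1)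
    (hσ0 : ∀ i, 0 ≤ σ i) (hσm : ∀ i j, i ≤ j → σ j ≤ σ i)
    (hA : A = U * diagRect σ 0 (k + m₂) (k + n₂) * Vᴴ)
    (hrank : 0 < σ (k - 1)) (hgap : σ k < σ (k - 1))
    (Ω : Matrix (Fin (k + n₂)) (Fin (k + ρ)) ℂ)
    (hΩ : ((colsL V)ᴴ * Ω).rank = k)
    (Q : Matrix (Fin (k + m₂)) (Fin (k + ρ)) ℂ)
    (R : Matrix (Fin (k + ρ)) (Fin (k + ρ)) ℂ)
    (hQ : Qᴴ * Q = 1) (hR : R.BlockTriangular id)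
    (hQR : (A * Aᴴ) ^ q * A * Ω = Q * R)
    (UB : Matrix (Fin (k + ρ)) (Fin (k + ρ)) ℂ)
    (Vh : Matrix (Fin (k + n₂)) (Fin (k + ρ)) ℂ)
    (σh : ℕ → ℝ)
    (hUB : UBᴴ * UB = 1) (hUB' : UB * UBᴴ = 1)
    (hVh : Vhᴴ * Vh = 1)
    (hσh0 : ∀ i, 0 ≤ σh i) (hσhm : ∀ i j, i ≤ j → σh j ≤ σh i)
    (hB : Qᴴ * A = UB * diagRect σh 0 (k + ρ) (k + ρ) * Vhᴴ)
    :
    ∀ p : ℝ≥0∞, 2 ≤ p →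
      schatten p (diagRect σ 0 (k + m₂) (k + n₂) -
          diagRect (fun i => if i < k + ρ then σh i else 0) 0 (k + m₂) (k + n₂)) ≤
        Real.sqrt ((schatten p (diagRect σ k m₂ n₂)) ^ 2 +
          (σ k / σ (k - 1)) ^ (4 * q) * (schatten p (diagRect σ k m₂ n₂ * ((colsR V)ᴴ * Ω * rpinv ((colsL V)ᴴ * Ω)))) ^ 2) := by
  intro p hp
  have hc : ∀ i < k, σ (k - 1) ≤ σ i := fun i hi => hσm i (k - 1) (by lia)
  have hsval : sval (Qᴴ * A) = fun i => if i < k + ρ then σh i else 0 := funext fun i => by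
    simp only [hB, sval_mul_diagRect_mul_conjTranspose hUB hVh hσh0 hσhm, and_self]
  rw [← hsval]
  exact hoffman_wielandt_schatten_sq_general q hU hV hσ0 hσm hA hrank hc hΩ hQ hQR hp
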